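/- For parameters (a, b, c, h, e) the generalized divided difference operators T_i = a + (b x_i + c x_{i+1} + h + e x_i x_{i+1})∂_i on ℂ[x_1, x_2, x_3] satisfy the braid relation T_1 T_2 T_1 = T_2 T_1 T_2 if (a+b)(a-c) + he = 0. -/

import Mathlib

open MvPolynomial

/-!
Put `P = b x₁ + c x₂ + h + e x₁ x₂`, `Q = b x₂ + c x₃ + h + e x₂ x₃` and `R = s₁ Q = s₂ P`. The
twisted Leibniz rule together with `∂ᵢ² = 0` gives
`(P∂₁)² = (b - c) P∂₁` and `(P∂₁)(Q∂₂)(P∂₁) = (h e - b c) P∂₁ + P Q R ∂₁∂₂∂₁`,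
and likewise with the two operators exchanged. Since `∂₁∂₂∂₁ = ∂₂∂₁∂₂`, expanding `Tᵢ = a + ⋯`
leaves `T₁T₂T₁ - T₂T₁T₂ = (a² + a (b - c) + h e - b c) (T₁ - T₂)`, whose coefficient
factors as `(a + b)(a - c) + h e`.
-/

section DividedDifference

variable {A : Type*} [CommRing A]

/-- `D` is the divided difference operator `f ↦ (s f - f) / δ` of an involution `s` of a commutative
ring that negates `δ`, as a reflection does with its root. Regularity of `δ` makes the quotient
unique. -/
structure IsDividedDifference (s : A →+* A) (δ : A) (D : A → A) : Prop where
  involutive : Function.Involutive s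
  map_root : s δ = -δ
  isRegular : IsRegular δ
  mul_apply (f : A) : δ * D f = s f - f

namespace IsDividedDifference

variable {s t : A →+* A} {δ ε : A} {D E : A → A}

theorem apply_eq_of_mul_eq (hD : IsDividedDifference s δ D) {f g : A} (h : δ * g = s f - f) :
    D f = g :=
  hD.isRegular.left ((hD.mul_apply f).trans h.symm)

theorem map_apply (hD : IsDividedDifference s δ D) (f : A) : s (D f) = D f := by
  have h := congrArg s (hD.mul_apply f)
  rw [map_mul, map_sub, hD.map_root, hD.involutive f] at h
  exact (hD.apply_eq_of_mul_eq (by linear_combination -h)).symm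

theorem apply_eq_zero (hD : IsDividedDifference s δ D) {f : A} (hf : s f = f) : D f = 0 :=
  hD.apply_eq_of_mul_eq (by rw [hf, sub_self, mul_zero])

theorem apply_apply (hD : IsDividedDifference s δ D) (f : A) : D (D f) = 0 :=
  hD.apply_eq_zero (hD.map_apply f)

theorem apply_add (hD : IsDividedDifference s δ D) (f g : A) : D (f + g) = D f + D g :=
  hD.apply_eq_of_mul_eq (by
    rw [map_add]
    linear_combination hD.mul_apply f + hD.mul_apply g)

theorem leibniz (hD : IsDividedDifference s δ D) (f g : A) : D (f * g) = D f * g + s f * D g :=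
  hD.apply_eq_of_mul_eq (by
    rw [map_mul]
    linear_combination g * hD.mul_apply f + s f * hD.mul_apply g)

theorem apply_mul_of_map_eq (hD : IsDividedDifference s δ D) {f : A} (hf : s f = f) (g : A) :
    D (f * g) = f * D g := by
  rw [hD.leibniz, hD.apply_eq_zero hf, hf, zero_mul, zero_add]

theorem apply_mul_apply (hD : IsDividedDifference s δ D) (f g : A) : D (f * D g) = D f * D g := by
  rw [hD.leibniz, hD.apply_apply, mul_zero, add_zero]

theorem isRegular_map (hD : IsDividedDifference s δ D) {u : A} (hu : IsRegular u) :
    IsRegular (s u) := by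
  rw [← isLeftRegular_iff_isRegular]
  intro f g hfg
  have h := congrArg s hfg
  simp only [map_mul, hD.involutive u] at h
  exact hD.involutive.injective (hu.left h)

theorem root_mul_apply_apply_apply (hD : IsDividedDifference s δ D)
    (hE : IsDividedDifference t ε E) (hsε : s ε = δ + ε) (htδ : t δ = δ + ε) (f : A) :
    δ * ε * (δ + ε) * D (E (D f)) = s (t (s f)) - s (t f) - t (s f) + s f + t f - f := by
  have htD : (δ + ε) * t (D f) = t (s f) - t f := by
    rw [← htδ, ← map_mul, hD.mul_apply, map_sub]
  have hstD : ε * s (t (D f)) = s (t (s f)) - s (t f) := by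
    have h := congrArg s htD
    rw [map_mul, map_add, map_sub, hD.map_root, hsε] at h
    linear_combination h
  have hsE : (δ + ε) * s (E (D f)) = s (t (D f)) - D f := by
    rw [← hsε, ← map_mul, hE.mul_apply, map_sub, hD.map_apply]
  linear_combination ε * (δ + ε) * hD.mul_apply (E (D f)) + ε * hsE - (δ + ε) * hE.mul_apply (D f)
    + hstD - htD + hD.mul_apply f

theorem braid (hD : IsDividedDifference s δ D) (hE : IsDividedDifference t ε E)
    (hsε : s ε = δ + ε) (htδ : t δ = δ + ε) (hst : ∀ f, s (t (s f)) = t (s (t f))) (f : A) :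
    D (E (D f)) = E (D (E f)) := by
  have hreg : IsRegular (δ * ε * (δ + ε)) :=
    (hD.isRegular.mul hE.isRegular).mul (hsε ▸ hD.isRegular_map hE.isRegular)
  apply hreg.left
  linear_combination hD.root_mul_apply_apply_apply hE hsε htδ f + hst f
    - hE.root_mul_apply_apply_apply hD (by rw [htδ, add_comm]) (by rw [hsε, add_comm]) f

theorem apply_mul_apply_mul_apply (hD : IsDividedDifference s δ D)
    (hE : IsDividedDifference t ε E) {P Q : A} (hPQ : s Q = t P) (f : A) :
    D (Q * E (P * D f)) = D (Q * E P) * D f + Q * t P * D (E (D f)) := by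
  have hfixed : s (Q * t P) = Q * t P := by
    rw [map_mul, ← hPQ, hD.involutive, mul_comm]
  calc D (Q * E (P * D f)) = D (Q * E P * D f + Q * t P * E (D f)) := by
        rw [hE.leibniz, mul_add, mul_assoc, mul_assoc]
    _ = D (Q * E P) * D f + Q * t P * D (E (D f)) := by
        rw [hD.apply_add, hD.apply_mul_apply, hD.apply_mul_of_map_eq hfixed]

theorem braidWord_eq (hD : IsDividedDifference s δ D) (hE : IsDividedDifference t ε E)
    {a P Q : A} (hsa : s a = a) (hta : t a = a) (hPQ : s Q = t P) {T U : A → A}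
    (hT : ∀ f, T f = a * f + P * D f) (hU : ∀ f, U f = a * f + Q * E f) (f : A) :
    T (U (T f)) = a ^ 3 * f + a ^ 2 * (P * D f + Q * E f)
      + a * (P * D (Q * E f) + Q * E (P * D f))
      + (a ^ 2 + a * D P + D (Q * E P)) * (P * D f) + P * Q * t P * D (E (D f)) := by
  have hUT : U (T f) = a * (a * f + P * D f + Q * E f) + Q * E (P * D f) := by
    rw [hU, hT, hE.apply_add, hE.apply_mul_of_map_eq hta]
    ring
  rw [hT (U (T f)), hUT]
  simp only [hD.apply_add, hD.apply_mul_of_map_eq hsa, hD.apply_mul_apply,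
    hD.apply_mul_apply_mul_apply hE hPQ]
  ring

theorem braidWord_sub_braidWord (hD : IsDividedDifference s δ D) (hE : IsDividedDifference t ε E)
    (hsε : s ε = δ + ε) (htδ : t δ = δ + ε) (hst : ∀ f, s (t (s f)) = t (s (t f)))
    {a P Q : A} (hsa : s a = a) (hta : t a = a) (hPQ : s Q = t P)
    (hquad : D P = E Q) (hcubic : D (Q * E P) = E (P * D Q)) {T U : A → A}
    (hT : ∀ f, T f = a * f + P * D f) (hU : ∀ f, U f = a * f + Q * E f) (f : A) :
    T (U (T f)) - U (T (U f)) = (a ^ 2 + a * D P + D (Q * E P)) * (T f - U f) := by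
  rw [hD.braidWord_eq hE hsa hta hPQ hT hU, hE.braidWord_eq hD hta hsa hPQ.symm hU hT,
    hD.braid hE hsε htδ hst, hPQ, ← hquad, ← hcubic, hT, hU]
  ring

end IsDividedDifference

end DividedDifference

section Polynomial

variable {σ R : Type*} [CommRing R]

theorem isRegular_X_sub_X {i j : σ} (hij : i ≠ j) :
    IsRegular (X j - X i : MvPolynomial σ R) := by
  classical
  obtain ⟨shear, hshear⟩ : ∃ shear : MvPolynomial σ R → MvPolynomial σ R →ₐ[R] MvPolynomial σ R,
      ∀ p l, shear p (X l) = Function.update X j p l :=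
    ⟨fun p ↦ aeval (Function.update X j p), fun p l ↦ aeval_X _ l⟩
  have hinv : Function.LeftInverse (shear (X j - X i)) (shear (X j + X i)) := by
    refine AlgHom.congr_fun (φ₁ := (shear (X j - X i)).comp (shear (X j + X i)))
      (φ₂ := AlgHom.id R _) (algHom_ext fun l ↦ ?_)
    rcases eq_or_ne l j with rfl | hl
    · simp [hshear, hij]
    · simp [hshear, hl]
  have hX : shear (X j + X i) (X j - X i) = X j := by simp [hshear, hij]
  rw [← isLeftRegular_iff_isRegular]
  intro f g hfg
  have h := congrArg (shear (X j + X i)) hfg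
  simp only [map_mul, hX] at h
  exact hinv.injective (isRegular_X.left h)

theorem rename_swap_involutive [DecidableEq σ] (i j : σ) :
    Function.Involutive (rename (R := R) (Equiv.swap i j)) := fun f ↦ by
  rw [rename_rename, ← Equiv.coe_trans]
  simp

theorem rename_swap_braid [DecidableEq σ] {i j k : σ} (hij : i ≠ j) (hik : i ≠ k)
    (hjk : j ≠ k) (f : MvPolynomial σ R) :
    rename (Equiv.swap i j) (rename (Equiv.swap j k) (rename (Equiv.swap i j) f)) =
      rename (Equiv.swap j k) (rename (Equiv.swap i j) (rename (Equiv.swap j k) f)) := by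
  have hswap : Equiv.swap i j * Equiv.swap j k * Equiv.swap i j =
      Equiv.swap j k * Equiv.swap i j * Equiv.swap j k := by
    rw [Equiv.swap_mul_swap_mul_swap hij hik, Equiv.swap_comm i j, Equiv.swap_comm j k,
      Equiv.swap_mul_swap_mul_swap hjk.symm hik.symm, Equiv.swap_comm]
  simp only [rename_rename, ← Equiv.Perm.coe_mul, ← mul_assoc, hswap]

/-- The polynomial `b Xᵢ + c Xⱼ + h + e Xᵢ Xⱼ` multiplying the divided difference in the operator
that exchanges `Xᵢ` and `Xⱼ`; the order of `i` and `j` matters. -/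
noncomputable def bilinearWeight (b c h e : R) (i j : σ) : MvPolynomial σ R :=
  C b * X i + C c * X j + C h + C e * (X i * X j)

theorem rename_bilinearWeight {τ : Type*} (g : σ → τ) (b c h e : R) (i j : σ) :
    rename g (bilinearWeight b c h e i j) = bilinearWeight b c h e (g i) (g j) := by
  simp [bilinearWeight]

namespace IsDividedDifference

variable [DecidableEq σ] {i j k : σ} {D : MvPolynomial σ R → MvPolynomial σ R}

theorem of_rename_swap (hij : i ≠ j)
    (hD : ∀ f, (X j - X i) * D f = rename (Equiv.swap i j) f - f) :
    IsDividedDifference (rename (Equiv.swap i j) : MvPolynomial σ R →ₐ[R] MvPolynomial σ R)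
      (X j - X i) D where
  involutive := rename_swap_involutive i j
  map_root := by simp
  isRegular := isRegular_X_sub_X hij
  mul_apply := hD

variable (hD : IsDividedDifference
  (rename (Equiv.swap i j) : MvPolynomial σ R →ₐ[R] MvPolynomial σ R) (X j - X i) D)
include hD

theorem apply_bilinearWeight (b c h e : R) : D (bilinearWeight b c h e i j) = C b - C c := by
  apply hD.apply_eq_of_mul_eq
  rw [RingHom.coe_coe, rename_bilinearWeight, Equiv.swap_apply_left, Equiv.swap_apply_right,
    bilinearWeight, bilinearWeight]
  ring

theorem apply_bilinearWeight_left (hki : k ≠ i) (hkj : k ≠ j) (b c h e : R) :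
    D (bilinearWeight b c h e k i) = C c + C e * X k := by
  apply hD.apply_eq_of_mul_eq
  rw [RingHom.coe_coe, rename_bilinearWeight, Equiv.swap_apply_left,
    Equiv.swap_apply_of_ne_of_ne hki hkj, bilinearWeight, bilinearWeight]
  ring

theorem apply_bilinearWeight_right (hki : k ≠ i) (hkj : k ≠ j) (b c h e : R) :
    D (bilinearWeight b c h e j k) = -(C b + C e * X k) := by
  apply hD.apply_eq_of_mul_eq
  rw [RingHom.coe_coe, rename_bilinearWeight, Equiv.swap_apply_right,
    Equiv.swap_apply_of_ne_of_ne hki hkj, bilinearWeight, bilinearWeight]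
  ring

theorem apply_bilinearWeight_right_mul (hki : k ≠ i) (hkj : k ≠ j) (b c h e : R) :
    D (bilinearWeight b c h e j k * (C c + C e * X i)) = C h * C e - C b * C c := by
  apply hD.apply_eq_of_mul_eq
  simp only [RingHom.coe_coe, map_mul, map_add, rename_C, rename_X,
    Equiv.swap_apply_left, Equiv.swap_apply_right, Equiv.swap_apply_of_ne_of_ne hki hkj,
    bilinearWeight]
  ring

theorem apply_bilinearWeight_left_mul (hki : k ≠ i) (hkj : k ≠ j) (b c h e : R) :
    D (bilinearWeight b c h e k i * -(C b + C e * X j)) = C h * C e - C b * C c := by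
  apply hD.apply_eq_of_mul_eq
  simp only [RingHom.coe_coe, map_mul, map_add, map_neg, rename_C, rename_X,
    Equiv.swap_apply_left, Equiv.swap_apply_right, Equiv.swap_apply_of_ne_of_ne hki hkj,
    bilinearWeight]
  ring

end IsDividedDifference

end Polynomial

theorem generalized_braid_relation_general {σ R : Type*} [CommRing R] [DecidableEq σ] {i j k : σ}
    (hij : i ≠ j) (hik : i ≠ k) (hjk : j ≠ k) (a b c h e : R)
    (D₁ D₂ T₁ T₂ : MvPolynomial σ R → MvPolynomial σ R)
    (hD₁ : ∀ f, (X j - X i) * D₁ f = rename (Equiv.swap i j) f - f)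
    (hD₂ : ∀ f, (X k - X j) * D₂ f = rename (Equiv.swap j k) f - f)
    (hT₁ : ∀ f, T₁ f = C a * f +
      (C b * X i + C c * X j + C h + C e * (X i * X j)) * D₁ f)
    (hT₂ : ∀ f, T₂ f = C a * f +
      (C b * X j + C c * X k + C h + C e * (X j * X k)) * D₂ f) (f : MvPolynomial σ R) :
    T₁ (T₂ (T₁ f)) - T₂ (T₁ (T₂ f)) = C ((a + b) * (a - c) + h * e) * (T₁ f - T₂ f) := by
  have hs : Equiv.swap i j k = k := Equiv.swap_apply_of_ne_of_ne hik.symm hjk.symm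
  have ht : Equiv.swap j k i = i := Equiv.swap_apply_of_ne_of_ne hij hik
  have hD := IsDividedDifference.of_rename_swap hij hD₁
  have hE := IsDividedDifference.of_rename_swap hjk hD₂
  have hPQ : rename (Equiv.swap i j) (bilinearWeight b c h e j k) =
      rename (Equiv.swap j k) (bilinearWeight b c h e i j) := by
    simp [rename_bilinearWeight, hs, ht]
  have hquad := hD.apply_bilinearWeight b c h e
  have hcubic : D₁ (bilinearWeight b c h e j k * D₂ (bilinearWeight b c h e i j)) =
      C h * C e - C b * C c := by
    rw [hE.apply_bilinearWeight_left hij hik, hD.apply_bilinearWeight_right_mul hik.symm hjk.symm]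
  have hcubic' : D₂ (bilinearWeight b c h e i j * D₁ (bilinearWeight b c h e j k)) =
      C h * C e - C b * C c := by
    rw [hD.apply_bilinearWeight_right hik.symm hjk.symm, hE.apply_bilinearWeight_left_mul hij hik]
  rw [hD.braidWord_sub_braidWord hE (by simp [hs]) (by simp [ht]) (rename_swap_braid hij hik hjk)
    (rename_C _ a) (rename_C _ a) hPQ (hquad.trans (hE.apply_bilinearWeight b c h e).symm)
    (hcubic.trans hcubic'.symm) hT₁ hT₂, hquad, hcubic]
  simp only [map_add, map_sub, map_mul]
  ring

/-- The generalized divided difference operators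
`T_i = a + (b x_i + c x_{i+1} + h + e x_i x_{i+1})∂_i` on `ℂ[x_1, x_2, x_3]` satisfy
the braid relation `T_1 T_2 T_1 = T_2 T_1 T_2` if `(a+b)(a-c) + he = 0`. -/
theorem generalized_braid_relation (a b c h e : ℂ)
    (hbraid : (a + b) * (a - c) + h * e = 0)
    (D₁ D₂ T₁ T₂ : MvPolynomial (Fin 3) ℂ → MvPolynomial (Fin 3) ℂ)
    (hD₁ : ∀ f, (X 1 - X 0) * D₁ f = rename (Equiv.swap 0 1) f - f)
    (hD₂ : ∀ f, (X 2 - X 1) * D₂ f = rename (Equiv.swap 1 2) f - f)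
    (hT₁ : ∀ f, T₁ f = C a * f +
      (C b * X 0 + C c * X 1 + C h + C e * (X 0 * X 1)) * D₁ f)
    (hT₂ : ∀ f, T₂ f = C a * f +
      (C b * X 1 + C c * X 2 + C h + C e * (X 1 * X 2)) * D₂ f) :
    ∀ f, T₁ (T₂ (T₁ f)) = T₂ (T₁ (T₂ f)) := by
  intro f
  have hsub := generalized_braid_relation_general (by decide) (by decide) (by decide)
    a b c h e D₁ D₂ T₁ T₂ hD₁ hD₂ hT₁ hT₂ f
  rwa [hbraid, C_0, zero_mul, sub_eq_zero] at hsub
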